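/- Assume Q_k = k + O(1) and Q_k > (k − 1/2)·θ/π for all k. Let Z̲ ≤ Z̄ be sequences of positive reals with ln Z̲_k = α_θ·ln k + o(1) and ln Z̄_k = α_θ·ln k + o(1). Then there exist sequences Z̲' ≤ Z̄' of positive reals with ln Z̲'_k = α_θ·ln k + o(1) and ln Z̄'_k = α_θ·ln k + o(1) such that: for every sequence of sequences (X^{(n)})_{n≥0} of positive reals with Z̲_k ≤ X^{(0)}_k ≤ Z̄_k for all k and φ_j(X^{(n)}, X^{(n+1)}) = Q_j for all j ≥ 1 and n ≥ 0, one has Z̲'_k ≤ X^{(n)}_k ≤ Z̄'_k for all k ≥ 1 and n ≥ 0. -/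

import Mathlib

open Filter Asymptotics MeasureTheory
open scoped ENNReal Topology

/-- `Theta θ E' E` is the argument of the complex number `E' + E·e^{iθ}`;
for `0 < θ < π` and `E', E > 0` it lies in `(0, θ)` and equals
`arctan (sin θ / (E'/E + cos θ))` with the branch taken in `(0, θ)`. -/
noncomputable def Theta (θ E' E : ℝ) : ℝ :=
  Complex.arg ((E' : ℂ) + (E : ℂ) * Complex.exp (θ * Complex.I))

/-- `phi θ X Y j = (1/π) · ∑_{k ≥ 1} Θ(X_k, Y_j) ∈ (0, ∞]`, where sequences are
indexed by `ℕ` and only the values at indices `k ≥ 1` are used. -/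
noncomputable def phi (θ : ℝ) (X Y : ℕ → ℝ) (j : ℕ) : ℝ≥0∞ :=
  ENNReal.ofReal (1 / Real.pi) * ∑' k : ℕ, ENNReal.ofReal (Theta θ (X (k + 1)) (Y j))

/-- `Pker θ E E' = E·E' / (E² + 2·cos θ·E·E' + E'²)`. -/
noncomputable def Pker (θ E E' : ℝ) : ℝ :=
  E * E' / (E ^ 2 + 2 * Real.cos θ * E * E' + E' ^ 2)

/-- The drift `D_α = (1/π) ∫_0^∞ Θ(s^α, 1) ds`. -/
noncomputable def Drift (θ α : ℝ) : ℝ :=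
  (1 / Real.pi) * ∫ s in Set.Ioi (0 : ℝ), Theta θ (s ^ α) 1

/-- `S_ε = ∫_0^∞ s^{-ε} / (s^{α_θ} + 2 cos θ + s^{-α_θ}) ds` with `α_θ = 1 + θ/π`. -/
noncomputable def Sfun (θ ε : ℝ) : ℝ :=
  ∫ s in Set.Ioi (0 : ℝ), s ^ (-ε) /
    (s ^ (1 + θ / Real.pi) + 2 * Real.cos θ + s ^ (-(1 + θ / Real.pi)))

/-! ### Elementary properties of `Theta` -/

lemma cs_pos (θ E' E : ℝ) : ((E' : ℂ) + (E : ℂ) * Complex.exp (θ * Complex.I)).re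
    = E' + E * Real.cos θ ∧ ((E' : ℂ) + (E : ℂ) * Complex.exp (θ * Complex.I)).im
    = E * Real.sin θ := by
  rw [Complex.add_re, Complex.add_im, Complex.re_ofReal_mul, Complex.im_ofReal_mul,
    Complex.exp_ofReal_mul_I_re, Complex.exp_ofReal_mul_I_im]
  simp

lemma arg_lt_of_cross {z w : ℂ} (hz : 0 < z.im) (hw : 0 < w.im)
    (h : 0 < z.re * w.im - z.im * w.re) : Complex.arg z < Complex.arg w := by
  by_contra hle
  push Not at hle
  have hz0 : 0 < ‖z‖ := norm_pos_iff.2 (fun h => by simp [h] at hz)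
  have hw0 : 0 < ‖w‖ := norm_pos_iff.2 (fun h => by simp [h] at hw)
  have e1 := Complex.norm_mul_cos_arg z
  have e2 := Complex.norm_mul_sin_arg z
  have e3 := Complex.norm_mul_cos_arg w
  have e4 := Complex.norm_mul_sin_arg w
  have hzpi := Complex.arg_le_pi z
  have hw1 : 0 ≤ Complex.arg w := Complex.arg_nonneg_iff.2 hw.le
  have hs : 0 ≤ Real.sin (Complex.arg z - Complex.arg w) :=
    Real.sin_nonneg_of_nonneg_of_le_pi (by linarith) (by linarith)
  rw [Real.sin_sub] at hs
  have : z.re * w.im - z.im * w.re = - (‖z‖ * ‖w‖ * (Real.sin (Complex.arg z) * Real.cos (Complex.arg w) - Real.cos (Complex.arg z) * Real.sin (Complex.arg w))) := by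
    rw [← e1, ← e2, ← e3, ← e4]; ring
  have h2 := mul_nonneg (mul_nonneg hz0.le hw0.le) hs
  linarith

lemma Theta_strictMono {θ : ℝ} (h0 : 0 < θ) (h1 : θ < Real.pi) {a b c : ℝ} (ha : 0 < a)
    (hb : 0 < b) (hbc : b < c) : Theta θ a b < Theta θ a c := by
  have hs := Real.sin_pos_of_pos_of_lt_pi h0 h1
  unfold Theta
  apply arg_lt_of_cross
  · rw [(cs_pos θ a b).2]; positivity
  · rw [(cs_pos θ a c).2]; exact mul_pos (hb.trans hbc) hs
  · rw [(cs_pos θ a c).2, (cs_pos θ a b).2, (cs_pos θ a c).1, (cs_pos θ a b).1]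
    have : 0 < a * (c - b) * Real.sin θ := mul_pos (mul_pos ha (by linarith)) hs
    linarith

lemma Theta_anti {θ : ℝ} (h0 : 0 < θ) (h1 : θ < Real.pi) {a b c : ℝ} 
    (hab : a ≤ b) (hc : 0 < c) : Theta θ b c ≤ Theta θ a c := by
  rcases hab.eq_or_lt with rfl | hab
  · exact le_rfl
  have hs := Real.sin_pos_of_pos_of_lt_pi h0 h1
  unfold Theta
  apply le_of_lt
  apply arg_lt_of_cross
  · rw [(cs_pos θ b c).2]; positivity
  · rw [(cs_pos θ a c).2]; positivity
  · rw [(cs_pos θ a c).2, (cs_pos θ b c).2, (cs_pos θ a c).1, (cs_pos θ b c).1]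
    have : 0 < (b - a) * c * Real.sin θ := mul_pos (mul_pos (by linarith) hc) hs
    linarith

lemma Theta_zero {θ : ℝ} (h0 : 0 < θ) (h1 : θ < Real.pi) {c : ℝ} (hc : 0 < c) :
    Theta θ 0 c = θ := by
  unfold Theta
  rw [Complex.ofReal_zero, zero_add, Complex.arg_real_mul _ hc, Complex.exp_mul_I]
  exact Complex.arg_cos_add_sin_mul_I ⟨by linarith [Real.pi_pos], h1.le⟩

lemma Theta_le {θ : ℝ} (h0 : 0 < θ) (h1 : θ < Real.pi) {a c : ℝ} (ha : 0 ≤ a) (hc : 0 < c) :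
    Theta θ a c ≤ θ := by
  simpa [Theta_zero h0 h1 hc] using Theta_anti h0 h1 ha hc

lemma Theta_nonneg {θ : ℝ} (h0 : 0 ≤ θ) (h1 : θ ≤ Real.pi) {a c : ℝ} (hc : 0 ≤ c) :
    0 ≤ Theta θ a c := by
  unfold Theta
  rw [Complex.arg_nonneg_iff, (cs_pos θ a c).2]
  exact mul_nonneg hc (Real.sin_nonneg_of_nonneg_of_le_pi h0 h1)

lemma Theta_smul (θ : ℝ) {r : ℝ} (hr : 0 < r) (a b : ℝ) :
    Theta θ (r * a) (r * b) = Theta θ a b := by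
  unfold Theta
  rw [← Complex.arg_real_mul ((a : ℂ) + _) hr]
  congr 1
  push_cast
  ring

lemma Theta_self {θ : ℝ} (h0 : 0 < θ) (h1 : θ < Real.pi) {a : ℝ} (ha : 0 < a) :
    Theta θ a a = θ / 2 := by
  have hc : 0 < Real.cos (θ / 2) := Real.cos_pos_of_mem_Ioo ⟨by linarith, by linarith⟩
  have : (a : ℂ) + (a : ℂ) * Complex.exp (θ * Complex.I) = ((2 * a * Real.cos (θ / 2) : ℝ) : ℂ)
      * (Complex.cos ((θ / 2 : ℝ) : ℂ) + Complex.sin ((θ / 2 : ℝ) : ℂ) * Complex.I) := by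
    rw [← Complex.exp_mul_I]
    apply Complex.ext
    · rw [(cs_pos θ a a).1]
      have := Real.cos_sq (θ / 2)
      rw [show 2 * (θ / 2) = θ by ring] at this
      rw [Complex.re_ofReal_mul, Complex.exp_ofReal_mul_I_re]
      linear_combination -2 * a * this
    · rw [(cs_pos θ a a).2]
      have := Real.sin_two_mul (θ / 2)
      rw [show 2 * (θ / 2) = θ by ring] at this
      rw [Complex.im_ofReal_mul, Complex.exp_ofReal_mul_I_im]
      linear_combination a * this
  unfold Theta
  rw [this, Complex.arg_mul_cos_add_sin_mul_I (by positivity) ⟨by linarith, by linarith⟩]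

lemma abs_Theta_le_pi (t a b : ℝ) : |Theta t a b| ≤ Real.pi := Complex.abs_arg_le_pi _

lemma abs_Theta_le (t : ℝ) {a b : ℝ} (ha : 0 < a) (hb : 0 < b) :
    |Theta t a b| ≤ 2 * Real.pi * (b / a) := by
  have hpi := Real.pi_gt_three
  have hba : 0 < b / a := by positivity
  by_cases h : b / a ≤ 1 / 2
  · have e : Theta t a b = Complex.arg (1 + ((b / a : ℝ) : ℂ) * Complex.exp (t * Complex.I)) := by
      unfold Theta
      rw [← Complex.arg_real_mul (1 + _) ha]
      congr 1
      have : (a : ℂ) ≠ 0 := by exact_mod_cast ha.ne'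
      push_cast
      field_simp
    have hn : ‖((b / a : ℝ) : ℂ) * Complex.exp (t * Complex.I)‖ = b / a := by
      rw [norm_mul, Complex.norm_exp_ofReal_mul_I, mul_one, Complex.norm_real,
        Real.norm_of_nonneg hba.le]
    have h3 := Complex.norm_log_one_add_half_le_self (hn.trans_le h)
    rw [hn] at h3
    have h4 := (Complex.abs_im_le_norm _).trans h3
    rw [Complex.log_im, ← e] at h4
    nlinarith
  · push Not at h
    have := abs_Theta_le_pi t a b
    nlinarith

lemma measurable_Theta (t α : ℝ) : Measurable (fun s : ℝ => Theta t (s ^ α) 1) := by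
  unfold Theta
  apply Complex.measurable_arg.comp
  fun_prop

/-! ### The analytic integral -/

noncomputable def gfun (α : ℝ) (z : ℂ) (s : ℝ) : ℂ :=
  Complex.log (((s ^ α : ℝ) : ℂ) + z) - ((α * Real.log s : ℝ) : ℂ)

noncomputable def Gfun (α : ℝ) (z : ℂ) : ℂ := ∫ s in Set.Ioi (0 : ℝ), gfun α z s

lemma add_mem_slit {z : ℂ} (hz : z ∈ Complex.slitPlane) {x : ℝ} (hx : 0 ≤ x) :
    (x : ℂ) + z ∈ Complex.slitPlane := by
  rw [Complex.mem_slitPlane_iff] at hz ⊢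
  simp only [Complex.add_re, Complex.ofReal_re, Complex.add_im, Complex.ofReal_im, zero_add]
  rcases hz with h | h
  · left; linarith
  · right; exact h

lemma lower_bound {z : ℂ} (hz : z ∈ Complex.slitPlane) :
    ∃ c > 0, ∀ x : ℝ, 0 ≤ x → c * (1 + x) ≤ ‖(x : ℂ) + z‖ := by
  have hz0 : 0 < ‖z‖ := norm_pos_iff.2 (Complex.slitPlane_ne_zero hz)
  set m := ‖z‖ with hm
  have hsq : m ^ 2 = z.re ^ 2 + z.im ^ 2 := by
    rw [hm, ← Complex.normSq_eq_norm_sq, Complex.normSq_apply]; ring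
  have hre : -m < z.re := by
    rw [Complex.mem_slitPlane_iff] at hz
    rcases hz with h | h
    · linarith
    · have : 0 < z.im ^ 2 := by positivity
      nlinarith
  have hre2 : z.re ≤ m := Complex.re_le_norm z
  -- squared constant
  set d := (m + z.re) / (2 * m) with hd
  have hdpos : 0 < d := by apply div_pos <;> linarith
  have key : ∀ x : ℝ, 0 ≤ x → d * (x + m) ^ 2 ≤ ‖(x : ℂ) + z‖ ^ 2 := by
    intro x hx
    rw [← Complex.normSq_eq_norm_sq, Complex.normSq_apply]
    simp only [Complex.add_re, Complex.ofReal_re, Complex.add_im, Complex.ofReal_im, zero_add]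
    have hdm : d * (2 * m) = m + z.re := by rw [hd]; field_simp
    have hd1 : d ≤ 1 := by rw [hd, div_le_one (by linarith)]; linarith
    have : (x + z.re) * (x + z.re) + z.im * z.im - d * (x + m) ^ 2 = (1 - d) * (x - m) ^ 2 := by
      linear_combination (-2 * x) * hdm - hsq
    nlinarith [mul_nonneg (sub_nonneg.2 hd1) (sq_nonneg (x - m))]
  refine ⟨Real.sqrt d * min 1 m, by positivity, fun x hx => ?_⟩
  have h1 : min 1 m * (1 + x) ≤ x + m := by
    have a1 := min_le_left 1 m
    have a2 := min_le_right 1 m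
    have := mul_le_mul_of_nonneg_right a1 hx
    linarith
  calc Real.sqrt d * min 1 m * (1 + x) = Real.sqrt d * (min 1 m * (1 + x)) := by ring
    _ ≤ Real.sqrt d * (x + m) := by gcongr
    _ = Real.sqrt (d * (x + m) ^ 2) := by
      rw [Real.sqrt_mul hdpos.le, Real.sqrt_sq (by linarith)]
    _ ≤ Real.sqrt (‖(x : ℂ) + z‖ ^ 2) := Real.sqrt_le_sqrt (key x hx)
    _ = _ := Real.sqrt_sq (norm_nonneg _)

lemma integrable_bound {α : ℝ} (hα : 1 < α) :
    IntegrableOn (fun s : ℝ => (1 + s ^ α)⁻¹) (Set.Ioi 0) := by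
  rw [← Set.Ioc_union_Ioi_eq_Ioi (zero_le_one' ℝ)]
  have hmeas : Measurable (fun s : ℝ => (1 + s ^ α)⁻¹) := by fun_prop
  apply IntegrableOn.union
  · apply Measure.integrableOn_of_bounded (M := 1) (by simp) hmeas.aestronglyMeasurable
    filter_upwards [ae_restrict_mem measurableSet_Ioc] with s hs
    have : 0 < s ^ α := Real.rpow_pos_of_pos hs.1 _
    rw [Real.norm_of_nonneg (by positivity)]
    apply inv_le_one_of_one_le₀; linarith
  · apply Integrable.mono' (integrableOn_Ioi_rpow_of_lt (a := -α) (by linarith) one_pos)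
      hmeas.aestronglyMeasurable
    filter_upwards [ae_restrict_mem measurableSet_Ioi] with s hs
    have hs0 : (0 : ℝ) < s := one_pos.trans hs
    have : 0 < s ^ α := Real.rpow_pos_of_pos hs0 _
    rw [Real.norm_of_nonneg (by positivity), Real.rpow_neg hs0.le]
    gcongr
    linarith

lemma measurable_gfun (α : ℝ) (z : ℂ) : Measurable (gfun α z) := by
  unfold gfun
  fun_prop

lemma integrable_gfun {α : ℝ} (hα : 1 < α) {z : ℂ} (hz : z ∈ Complex.slitPlane) :
    IntegrableOn (gfun α z) (Set.Ioi 0) := by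
  have hz0 : 0 < ‖z‖ := norm_pos_iff.2 (Complex.slitPlane_ne_zero hz)
  have hα0 : 0 < α := by linarith
  set R : ℝ := (2 * ‖z‖) ^ α⁻¹ with hR
  have hRpos : 0 < R := by positivity
  rw [← Set.Ioc_union_Ioi_eq_Ioi hRpos.le]
  apply IntegrableOn.union
  · unfold gfun
    apply Integrable.sub
    · apply IntegrableOn.mono_set (t := Set.Icc 0 R) _ Set.Ioc_subset_Icc_self
      apply ContinuousOn.integrableOn_Icc
      apply ContinuousOn.clog
      · apply ContinuousOn.add _ continuousOn_const
        exact (Complex.continuous_ofReal.comp (Real.continuous_rpow_const hα0.le)).continuousOn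
      · intro x hx
        exact add_mem_slit hz (Real.rpow_nonneg hx.1 _)
    · apply Integrable.ofReal
      apply Integrable.const_mul
      exact (intervalIntegrable_iff_integrableOn_Ioc_of_le hRpos.le).1
        intervalIntegral.intervalIntegrable_log'
  · apply Integrable.mono' ((integrableOn_Ioi_rpow_of_lt (a := -α) (by linarith) hRpos).const_mul (3 / 2 * ‖z‖))
      (measurable_gfun α z).aestronglyMeasurable
    filter_upwards [ae_restrict_mem measurableSet_Ioi] with s hs
    have hs0 : (0 : ℝ) < s := hRpos.trans hs
    have hp : 0 < s ^ α := Real.rpow_pos_of_pos hs0 _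
    have hbig : 2 * ‖z‖ ≤ s ^ α := by
      calc 2 * ‖z‖ = R ^ α := by
            rw [hR, ← Real.rpow_mul (by positivity), inv_mul_cancel₀ hα0.ne', Real.rpow_one]
        _ ≤ s ^ α := Real.rpow_le_rpow hRpos.le (le_of_lt hs) hα0.le
    have hne : ((s ^ α : ℝ) : ℂ) ≠ 0 := by exact_mod_cast hp.ne'
    have e : gfun α z s = Complex.log (1 + z / ((s ^ α : ℝ) : ℂ)) := by
      unfold gfun
      have : ((s ^ α : ℝ) : ℂ) + z = ((s ^ α : ℝ) : ℂ) * (1 + z / ((s ^ α : ℝ) : ℂ)) := by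
        field_simp
      rw [this, Complex.log_ofReal_mul hp, Real.log_rpow hs0]
      · ring
      · intro h0
        rw [h0, mul_zero] at this
        exact Complex.slitPlane_ne_zero (add_mem_slit hz hp.le) this
    have hn : ‖z / ((s ^ α : ℝ) : ℂ)‖ = ‖z‖ * s ^ (-α) := by
      rw [norm_div, Complex.norm_real, Real.norm_of_nonneg hp.le, Real.rpow_neg hs0.le]; rfl
    have hle : ‖z / ((s ^ α : ℝ) : ℂ)‖ ≤ 1 / 2 := by
      rw [norm_div, Complex.norm_real, Real.norm_of_nonneg hp.le, div_le_iff₀ hp]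
      linarith
    rw [e]
    refine (Complex.norm_log_one_add_half_le_self hle).trans (le_of_eq ?_)
    rw [hn]; ring

lemma Gfun_hasDerivAt {α : ℝ} (hα : 1 < α) {z : ℂ} (hz : z ∈ Complex.slitPlane) :
    ∃ d, HasDerivAt (Gfun α) d z := by
  obtain ⟨c, hc, hlow⟩ := lower_bound hz
  obtain ⟨ε, hε, hball⟩ := Metric.isOpen_iff.1 Complex.isOpen_slitPlane z hz
  set δ := min ε (c / 2) with hδ
  have hδpos : 0 < δ := by positivity
  have hslit : ∀ w ∈ Metric.ball z δ, w ∈ Complex.slitPlane := fun w hw =>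
    hball (Metric.ball_subset_ball (min_le_left _ _) hw)
  have hlow2 : ∀ w ∈ Metric.ball z δ, ∀ x : ℝ, 0 ≤ x → c / 2 * (1 + x) ≤ ‖(x : ℂ) + w‖ := by
    intro w hw x hx
    have h1 := hlow x hx
    have h2 : ‖w - z‖ < c / 2 := by
      have := Metric.mem_ball.1 hw
      rw [dist_eq_norm] at this
      exact this.trans_le (min_le_right _ _)
    have h3 : ‖(x : ℂ) + z‖ ≤ ‖(x : ℂ) + w‖ + ‖w - z‖ := by
      have := norm_sub_le ((x : ℂ) + w) (w - z)
      rwa [show (x : ℂ) + w - (w - z) = x + z by ring] at this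
    nlinarith
  have := hasDerivAt_integral_of_dominated_loc_of_deriv_le (𝕜 := ℂ) (F := gfun α)
    (F' := fun w s => 1 / (((s ^ α : ℝ) : ℂ) + w)) (x₀ := z) (s := Metric.ball z δ)
    (μ := volume.restrict (Set.Ioi 0)) (bound := fun s => (c / 2)⁻¹ * (1 + s ^ α)⁻¹)
    (Metric.ball_mem_nhds z hδpos)
    (Eventually.of_forall fun w => (measurable_gfun α w).aestronglyMeasurable)
    (integrable_gfun hα hz)
    (by
      apply Measurable.aestronglyMeasurable
      fun_prop)
    (by
      filter_upwards [ae_restrict_mem measurableSet_Ioi] with s hs w hw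
      have hp : 0 < s ^ α := Real.rpow_pos_of_pos hs _
      rw [norm_div, norm_one, one_div, ← mul_inv]
      exact inv_anti₀ (by positivity) (hlow2 w hw _ hp.le))
    ((integrable_bound hα).const_mul _)
    (by
      filter_upwards [ae_restrict_mem measurableSet_Ioi] with s hs w hw
      have hp : 0 < s ^ α := Real.rpow_pos_of_pos hs _
      unfold gfun
      apply HasDerivAt.sub_const
      apply HasDerivAt.clog _ (add_mem_slit (hslit w hw) hp.le)
      exact (hasDerivAt_id w).const_add _)
  exact ⟨_, this.2⟩

lemma Gfun_scale {α : ℝ} {z : ℂ} (hz : z ∈ Complex.slitPlane) {r : ℝ} (hr : 0 < r) :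
    Gfun α (((r ^ α : ℝ) : ℂ) * z) = (r : ℂ) * Gfun α z := by
  have h := integral_comp_mul_left_Ioi (gfun α (((r ^ α : ℝ) : ℂ) * z)) 0 hr
  rw [mul_zero] at h
  have h2 : ∫ x in Set.Ioi (0 : ℝ), gfun α (((r ^ α : ℝ) : ℂ) * z) (r * x) = Gfun α z := by
    apply setIntegral_congr_fun measurableSet_Ioi
    intro s hs
    have hs : 0 < s := hs
    have hrp : 0 < r ^ α := Real.rpow_pos_of_pos hr _
    have hp : 0 < s ^ α := Real.rpow_pos_of_pos hs _
    simp only [gfun]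
    rw [Real.mul_rpow hr.le hs.le, Complex.ofReal_mul, ← mul_add, Complex.log_ofReal_mul hrp
      (Complex.slitPlane_ne_zero (add_mem_slit hz hp.le)), Real.log_rpow hr,
      Real.log_mul hr.ne' hs.ne']
    push_cast
    ring
  rw [h2] at h
  have hr' : (r : ℂ) ≠ 0 := by exact_mod_cast hr.ne'
  unfold Gfun at h ⊢
  rw [h, Complex.real_smul]
  push_cast
  field_simp

lemma Gfun_ode {α : ℝ} (hα : 1 < α) {z : ℂ} (hz : z ∈ Complex.slitPlane) :
    HasDerivAt (Gfun α) (Gfun α z / (α * z)) z := by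
  obtain ⟨d, hd⟩ := Gfun_hasDerivAt hα hz
  have hα0 : (α : ℂ) ≠ 0 := by exact_mod_cast (by linarith : α ≠ 0)
  have hz0 := Complex.slitPlane_ne_zero hz
  have h1 : HasDerivAt (fun r : ℝ => ((r ^ α : ℝ) : ℂ) * z) ((α : ℂ) * z) 1 := by
    have := ((Real.hasDerivAt_rpow_const (x := 1) (p := α) (Or.inl one_ne_zero)).ofReal_comp).mul_const z
    simpa using this
  have h2 : HasDerivAt (fun r : ℝ => Gfun α (((r ^ α : ℝ) : ℂ) * z)) (d * ((α : ℂ) * z)) 1 := by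
    apply HasDerivAt.comp (h₂ := Gfun α) 1 _ h1
    simpa using hd
  have h3 : HasDerivAt (fun r : ℝ => (r : ℂ) * Gfun α z) (Gfun α z) 1 := by
    have := (Complex.ofRealCLM.hasDerivAt (x := (1:ℝ))).mul_const (Gfun α z)
    simpa using this
  have h4 : (fun r : ℝ => Gfun α (((r ^ α : ℝ) : ℂ) * z)) =ᶠ[𝓝 1] (fun r : ℝ => (r : ℂ) * Gfun α z) := by
    filter_upwards [lt_mem_nhds (zero_lt_one' ℝ)] with r hr using Gfun_scale hz hr
  have h5 := (h2.congr_of_eventuallyEq h4.symm).unique h3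
  have : Gfun α z / (α * z) = d := by
    rw [← h5]; field_simp
  rwa [this]

lemma exp_mem_slit {t : ℝ} (h0 : 0 ≤ t) (h1 : t < Real.pi) :
    Complex.exp (t * Complex.I) ∈ Complex.slitPlane := by
  rw [Complex.mem_slitPlane_iff, Complex.exp_ofReal_mul_I_re, Complex.exp_ofReal_mul_I_im]
  rcases h0.eq_or_lt with rfl | h0
  · left; simp
  · right; exact (Real.sin_pos_of_pos_of_lt_pi h0 h1).ne'

lemma Gfun_exp {α : ℝ} (hα : 1 < α) {t : ℝ} (h0 : 0 ≤ t) (h1 : t < Real.pi) :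
    Gfun α (Complex.exp (t * Complex.I)) = Complex.exp ((t / α : ℝ) * Complex.I) * Gfun α 1 := by
  have hα0 : (α : ℂ) ≠ 0 := by exact_mod_cast (by linarith : α ≠ 0)
  have hd : ∀ x ∈ Set.Icc 0 t, HasDerivAt (fun x : ℝ => Gfun α (Complex.exp (x * Complex.I)) *
      Complex.exp (-((x / α : ℝ) * Complex.I))) 0 x := by
    intro x hx
    have e0 : HasDerivAt (fun x : ℝ => (x : ℂ) * Complex.I) Complex.I x := by
      simpa using (Complex.ofRealCLM.hasDerivAt (x := x)).mul_const Complex.I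
    have e1 := e0.cexp
    have e2 : HasDerivAt (fun x : ℝ => -(((x / α : ℝ) : ℂ) * Complex.I)) (-(Complex.I / α)) x := by
      have := (e0.div_const (α : ℂ)).neg
      refine this.congr_of_eventuallyEq (Eventually.of_forall fun y => ?_)
      simp only [Pi.neg_apply]
      push_cast
      ring
    have hG := Gfun_ode hα (exp_mem_slit hx.1 (hx.2.trans_lt h1))
    have e3 : HasDerivAt (fun x : ℝ => Gfun α (Complex.exp (x * Complex.I))) _ x :=
      HasDerivAt.comp (h₂ := Gfun α) x hG e1
    have := e3.mul e2.cexp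
    have hne := Complex.exp_ne_zero (x * Complex.I)
    have hz : Gfun α (Complex.exp (x * Complex.I)) / (α * Complex.exp (x * Complex.I)) *
          (Complex.exp (x * Complex.I) * Complex.I) * Complex.exp (-((x / α : ℝ) * Complex.I)) +
        Gfun α (Complex.exp (x * Complex.I)) *
          (Complex.exp (-((x / α : ℝ) * Complex.I)) * -(Complex.I / α)) = 0 := by
      field_simp
      ring
    rw [hz] at this
    exact this
  have := constant_of_has_deriv_right_zero (fun x hx => (hd x hx).continuousAt.continuousWithinAt)
    (fun x hx => (hd x (Set.Ico_subset_Icc_self hx)).hasDerivWithinAt) t ⟨h0, le_rfl⟩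
  simp only [Complex.ofReal_zero, zero_mul, Complex.exp_zero, zero_div, neg_zero, mul_one] at this
  rw [← this, mul_left_comm, ← Complex.exp_add]
  simp

lemma Theta_integrable_general {α : ℝ} (hα : 1 < α) :
    ∃ B : ℝ → ℝ, IntegrableOn B (Set.Ioi 0) ∧ ∀ t s : ℝ, 0 < s → ‖Theta t (s ^ α) 1‖ ≤ B s := by
  refine ⟨fun s => 4 * Real.pi * (1 + s ^ α)⁻¹, (integrable_bound hα).const_mul _, fun t s hs => ?_⟩
  have hp : 0 < s ^ α := Real.rpow_pos_of_pos hs _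
  have hpi := Real.pi_pos
  rw [Real.norm_eq_abs]
  beta_reduce
  rw [← div_eq_mul_inv, le_div_iff₀ (by positivity)]
  have h1 := abs_Theta_le_pi t (s ^ α) 1
  have h2 := abs_Theta_le t hp one_pos
  rw [one_div, ← div_eq_mul_inv, le_div_iff₀ hp] at h2
  nlinarith

lemma Theta_integrable {α : ℝ} (hα : 1 < α) (t : ℝ) :
    IntegrableOn (fun s : ℝ => Theta t (s ^ α) 1) (Set.Ioi 0) := by
  obtain ⟨B, hB, h⟩ := Theta_integrable_general hα
  apply Integrable.mono' hB (measurable_Theta t α).aestronglyMeasurable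
  filter_upwards [ae_restrict_mem measurableSet_Ioi] with s hs using h t s hs

lemma gfun_im (α t s : ℝ) : (gfun α (Complex.exp (t * Complex.I)) s).im = Theta t (s ^ α) 1 := by
  unfold gfun Theta
  rw [Complex.sub_im, Complex.log_im, Complex.ofReal_im]
  simp

lemma integral_Theta_eq {α : ℝ} (hα : 1 < α) :
    ∃ c : ℝ, ∀ t : ℝ, 0 ≤ t → t < Real.pi →
      ∫ s in Set.Ioi (0 : ℝ), Theta t (s ^ α) 1 = c * Real.sin (t / α) := by
  have key : ∀ t : ℝ, 0 ≤ t → t < Real.pi →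
      ∫ s in Set.Ioi (0 : ℝ), Theta t (s ^ α) 1 = (Gfun α (Complex.exp (t * Complex.I))).im := by
    intro t h0 h1
    have := integral_im (integrable_gfun hα (exp_mem_slit h0 h1))
    simp only [RCLike.im_to_complex, gfun_im] at this
    exact this
  have him : (Gfun α 1).im = 0 := by
    have h := key 0 le_rfl Real.pi_pos
    simp only [Complex.ofReal_zero, zero_mul, Complex.exp_zero] at h
    rw [← h]
    apply setIntegral_eq_zero_of_forall_eq_zero
    intro s hs
    have hp : 0 < s ^ α := Real.rpow_pos_of_pos hs _
    unfold Theta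
    simp only [Complex.ofReal_zero, zero_mul, Complex.exp_zero]
    rw [Complex.arg_eq_zero_iff]
    constructor
    · simp; linarith
    · simp
  refine ⟨(Gfun α 1).re, fun t h0 h1 => ?_⟩
  rw [key t h0 h1, Gfun_exp hα h0 h1, Complex.mul_im, him, Complex.exp_ofReal_mul_I_im]
  ring

lemma tendsto_Theta_pi {a : ℝ} (ha1 : a ≠ 1) :
    Tendsto (fun t : ℝ => Theta t a 1) (𝓝[<] Real.pi) (𝓝 (if a < 1 then Real.pi else 0)) := by
  have hlim : Tendsto (fun t : ℝ => (a : ℂ) + ((1 : ℝ) : ℂ) * Complex.exp (t * Complex.I))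
      (𝓝[<] Real.pi) (𝓝 ((a - 1 : ℝ) : ℂ)) := by
    have : Continuous (fun t : ℝ => (a : ℂ) + ((1 : ℝ) : ℂ) * Complex.exp (t * Complex.I)) := by
      fun_prop
    have h := this.tendsto Real.pi
    simp only [Complex.exp_pi_mul_I] at h
    have e : (a : ℂ) + ((1 : ℝ) : ℂ) * -1 = ((a - 1 : ℝ) : ℂ) := by push_cast; ring
    rw [e] at h
    exact h.mono_left nhdsWithin_le_nhds
  have him : ∀ᶠ t : ℝ in 𝓝[<] Real.pi, (a : ℂ) + ((1 : ℝ) : ℂ) * Complex.exp (t * Complex.I) ∈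
      {z : ℂ | 0 ≤ z.im} := by
    have : ∀ᶠ t : ℝ in 𝓝[<] Real.pi, t ∈ Set.Ioo 0 Real.pi := Ioo_mem_nhdsLT Real.pi_pos
    filter_upwards [this] with t ht
    rw [(cs_pos t a 1).2, one_mul]
    exact (Real.sin_pos_of_pos_of_lt_pi ht.1 ht.2).le
  unfold Theta
  split_ifs with h
  · have hneg : a - 1 < 0 := by linarith
    have hc := Complex.continuousWithinAt_arg_of_re_neg_of_im_zero (z := ((a - 1 : ℝ) : ℂ))
      (by simpa using hneg) (by simp)
    have h2 := hc.tendsto.comp (tendsto_nhdsWithin_iff.2 ⟨hlim, him⟩)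
    rw [Complex.arg_ofReal_of_neg hneg] at h2
    exact h2
  · have hpos : 0 < a - 1 := by
      rcases lt_trichotomy a 1 with h' | h' | h'
      · exact absurd h' h
      · exact absurd h' ha1
      · linarith
    have hc := Complex.continuousAt_arg (x := ((a - 1 : ℝ) : ℂ)) (by
      rw [Complex.mem_slitPlane_iff]; left; simpa using hpos)
    have h2 := hc.tendsto.comp hlim
    rw [Complex.arg_ofReal_of_nonneg hpos.le] at h2
    exact h2

lemma integral_Theta {θ : ℝ} (h0 : 0 < θ) (h1 : θ < Real.pi) :
    ∫ s in Set.Ioi (0 : ℝ), Theta θ (s ^ (1 + θ / Real.pi)) 1 = Real.pi := by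
  have hpi := Real.pi_pos
  set α := 1 + θ / Real.pi with hαdef
  have hα : 1 < α := by rw [hαdef]; have : 0 < θ / Real.pi := by positivity
                        linarith
  obtain ⟨c, hc⟩ := integral_Theta_eq hα
  obtain ⟨B, hB, hBound⟩ := Theta_integrable_general hα
  have hlim : Tendsto (fun t : ℝ => ∫ s in Set.Ioi (0 : ℝ), Theta t (s ^ α) 1) (𝓝[<] Real.pi)
      (𝓝 (∫ s in Set.Ioi (0 : ℝ), (Set.Ioo (0:ℝ) 1).indicator (fun _ => Real.pi) s)) := by
    apply tendsto_integral_filter_of_dominated_convergence B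
    · exact Eventually.of_forall fun t => (measurable_Theta t α).aestronglyMeasurable
    · refine Eventually.of_forall fun t => ?_
      filter_upwards [ae_restrict_mem measurableSet_Ioi] with s hs using hBound t s hs
    · exact hB
    · have hne : ∀ᵐ s : ℝ ∂(volume.restrict (Set.Ioi 0)), s ≠ 1 := by
        apply ae_restrict_of_ae
        exact Measure.ae_ne volume 1
      filter_upwards [ae_restrict_mem measurableSet_Ioi, hne] with s hs hs1
      have hs : 0 < s := hs
      have hp : 0 < s ^ α := Real.rpow_pos_of_pos hs _
      have hlt : s ^ α < 1 ↔ s < 1 := by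
        rw [Real.rpow_lt_one_iff_of_pos hs]
        constructor
        · rintro (h | h)
          · linarith [h.2]
          · exact h.1
        · intro h; right; exact ⟨h, by linarith⟩
      have h := tendsto_Theta_pi (a := s ^ α) (by
        intro h
        rcases lt_or_gt_of_ne hs1 with h' | h'
        · have := hlt.2 h'; linarith
        · have := Real.one_lt_rpow h' (by linarith : 0 < α); linarith)
      convert h using 2
      by_cases hs2 : s < 1
      · rw [Set.indicator_of_mem (show s ∈ Set.Ioo (0:ℝ) 1 from ⟨hs, hs2⟩), if_pos (hlt.2 hs2)]
      · rw [Set.indicator_of_notMem (fun h => hs2 h.2), if_neg (fun h => hs2 (hlt.1 h))]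
  have hval : ∫ s in Set.Ioi (0 : ℝ), (Set.Ioo (0:ℝ) 1).indicator (fun _ => Real.pi) s = Real.pi := by
    rw [setIntegral_indicator measurableSet_Ioo,
      Set.inter_eq_right.2 (Set.Ioo_subset_Ioi_self : Set.Ioo (0:ℝ) 1 ⊆ Set.Ioi 0)]
    simp
  rw [hval] at hlim
  have hlim2 : Tendsto (fun t : ℝ => c * Real.sin (t / α)) (𝓝[<] Real.pi)
      (𝓝 (c * Real.sin (Real.pi / α))) := by
    have : Continuous (fun t : ℝ => c * Real.sin (t / α)) := by fun_prop
    exact (this.tendsto _).mono_left nhdsWithin_le_nhds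
  have hev : (fun t : ℝ => ∫ s in Set.Ioi (0 : ℝ), Theta t (s ^ α) 1) =ᶠ[𝓝[<] Real.pi]
      (fun t : ℝ => c * Real.sin (t / α)) := by
    have : ∀ᶠ t : ℝ in 𝓝[<] Real.pi, t ∈ Set.Ioo 0 Real.pi := Ioo_mem_nhdsLT hpi
    filter_upwards [this] with t ht using hc t ht.1.le ht.2
  have heq : c * Real.sin (Real.pi / α) = Real.pi :=
    tendsto_nhds_unique (hlim2.congr' hev.symm) hlim
  rw [hc θ h0.le h1, ← heq]
  congr 1
  rw [← Real.sin_pi_sub]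
  congr 1
  have : α * Real.pi = Real.pi + θ := by rw [hαdef]; field_simp
  have hα0 : α ≠ 0 := by linarith
  field_simp
  linarith

/-! ### Sums versus integrals -/

lemma Theta_rpow (θ α : ℝ) {c s : ℝ} (hc : 0 < c) (hs : 0 ≤ s) :
    Theta θ (s ^ α) (c ^ α) = Theta θ ((c⁻¹ * s) ^ α) 1 := by
  have hcp : 0 < c ^ α := Real.rpow_pos_of_pos hc _
  rw [← Theta_smul θ hcp _ 1, mul_one, ← Real.mul_rpow hc.le (by positivity),
    mul_inv_cancel_left₀ hc.ne']

lemma alpha_gt {θ : ℝ} (h0 : 0 < θ) (_h1 : θ < Real.pi) : 1 < 1 + θ / Real.pi := by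
  have : 0 < θ / Real.pi := div_pos h0 Real.pi_pos
  linarith

lemma Theta_rpow_integrable {θ : ℝ} (h0 : 0 < θ) (h1 : θ < Real.pi) {c : ℝ} (hc : 0 < c) :
    IntegrableOn (fun s : ℝ => Theta θ (s ^ (1 + θ / Real.pi)) (c ^ (1 + θ / Real.pi)))
      (Set.Ioi 0) := by
  have h := (integrableOn_Ioi_comp_mul_left_iff (fun s => Theta θ (s ^ (1 + θ / Real.pi)) 1) 0
    (inv_pos.2 hc)).2 (by simpa using Theta_integrable (alpha_gt h0 h1) θ)
  refine h.congr_fun (fun s hs => ?_) measurableSet_Ioi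
  exact (Theta_rpow θ _ hc (le_of_lt hs)).symm

lemma Theta_rpow_integral {θ : ℝ} (h0 : 0 < θ) (h1 : θ < Real.pi) {c : ℝ} (hc : 0 < c) :
    ∫ s in Set.Ioi (0 : ℝ), Theta θ (s ^ (1 + θ / Real.pi)) (c ^ (1 + θ / Real.pi))
      = c * Real.pi := by
  have h := integral_comp_mul_left_Ioi (fun s => Theta θ (s ^ (1 + θ / Real.pi)) 1) 0 (inv_pos.2 hc)
  rw [mul_zero, integral_Theta h0 h1, inv_inv, smul_eq_mul] at h
  rw [← h]
  apply setIntegral_congr_fun measurableSet_Ioi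
  intro s hs
  exact Theta_rpow θ _ hc (le_of_lt hs)

lemma Theta_rpow_antitone {θ : ℝ} (h0 : 0 < θ) (h1 : θ < Real.pi) {c : ℝ} (hc : 0 < c) :
    AntitoneOn (fun s : ℝ => Theta θ (s ^ (1 + θ / Real.pi)) (c ^ (1 + θ / Real.pi)))
      (Set.Ici 0) := by
  intro a ha b hb hab
  apply Theta_anti h0 h1 _ (Real.rpow_pos_of_pos hc _)
  exact Real.rpow_le_rpow ha hab (by linarith [alpha_gt h0 h1])

lemma sum_upper {θ : ℝ} (h0 : 0 < θ) (h1 : θ < Real.pi) {c : ℝ} (hc : 0 < c) :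
    (Summable fun k : ℕ => Theta θ (((k + 1 : ℕ) : ℝ) ^ (1 + θ / Real.pi)) (c ^ (1 + θ / Real.pi))) ∧
    ∑' k : ℕ, Theta θ (((k + 1 : ℕ) : ℝ) ^ (1 + θ / Real.pi)) (c ^ (1 + θ / Real.pi))
      ≤ c * Real.pi := by
  have hnn : ∀ s : ℝ, 0 ≤ Theta θ (s ^ (1 + θ / Real.pi)) (c ^ (1 + θ / Real.pi)) := fun s =>
    Theta_nonneg h0.le h1.le (Real.rpow_nonneg hc.le _)
  have hb : ∀ n : ℕ, ∑ k ∈ Finset.range n,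
      Theta θ (((k + 1 : ℕ) : ℝ) ^ (1 + θ / Real.pi)) (c ^ (1 + θ / Real.pi)) ≤ c * Real.pi := by
    intro n
    have h := AntitoneOn.sum_le_integral (x₀ := 0) (a := n)
      ((Theta_rpow_antitone h0 h1 hc).mono Set.Icc_subset_Ici_self)
    simp only [zero_add] at h
    refine h.trans ?_
    rw [← Theta_rpow_integral h0 h1 hc, intervalIntegral.integral_of_le (by positivity)]
    apply setIntegral_mono_set (Theta_rpow_integrable h0 h1 hc)
    · exact Eventually.of_forall fun s => hnn s
    · exact Set.Ioc_subset_Ioi_self.eventuallyLE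
  exact ⟨summable_of_sum_range_le (fun k => hnn _) hb, Real.tsum_le_of_sum_range_le (fun k => hnn _) hb⟩

lemma sum_lower {θ : ℝ} (h0 : 0 < θ) (h1 : θ < Real.pi) {c : ℝ} (hc : 0 < c) (L : ℕ) :
    (Summable fun k : ℕ => Theta θ (((k + 1 + L : ℕ) : ℝ) ^ (1 + θ / Real.pi))
      (c ^ (1 + θ / Real.pi))) ∧ c * Real.pi - (1 + L) * θ ≤
    ∑' k : ℕ, Theta θ (((k + 1 + L : ℕ) : ℝ) ^ (1 + θ / Real.pi)) (c ^ (1 + θ / Real.pi)) := by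
  set f : ℝ → ℝ := fun s => Theta θ (s ^ (1 + θ / Real.pi)) (c ^ (1 + θ / Real.pi)) with hf
  have hnn : ∀ s : ℝ, 0 ≤ f s := fun s =>
    Theta_nonneg h0.le h1.le (Real.rpow_nonneg hc.le _)
  have hs : Summable fun k : ℕ => f ((k + 1 + L : ℕ) : ℝ) := by
    have := (summable_nat_add_iff L).2 (sum_upper h0 h1 hc).1
    refine this.congr fun k => ?_
    simp only [hf]
    congr 3
    omega
  refine ⟨hs, ?_⟩
  have hI := Theta_rpow_integrable h0 h1 hc
  have hpos : (0 : ℝ) ≤ 1 + L := by positivity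
  have hI2 : IntegrableOn f (Set.Ioi (1 + L : ℝ)) := hI.mono_set (Set.Ioi_subset_Ioi hpos)
  have hlim := intervalIntegral_tendsto_integral_Ioi (b := fun n : ℕ => (1 + L + n : ℝ)) (l := atTop)
    (1 + L : ℝ) hI2 (tendsto_atTop_add_const_left _ _ tendsto_natCast_atTop_atTop)
  have h2 : ∫ s in Set.Ioi (1 + L : ℝ), f s ≤ ∑' k : ℕ, f ((k + 1 + L : ℕ) : ℝ) := by
    apply le_of_tendsto' hlim
    intro n
    refine (AntitoneOn.integral_le_sum (x₀ := (1 + L : ℝ)) (a := n) (f := f)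
      ((Theta_rpow_antitone h0 h1 hc).mono ?_)).trans ?_
    · intro x hx
      exact hpos.trans hx.1
    · refine le_trans (le_of_eq ?_) (hs.sum_le_tsum (Finset.range n) (fun i _ => hnn _))
      apply Finset.sum_congr rfl
      intro i _
      congr 1
      push_cast
      ring
  have h3 : ∫ s in Set.Ioi (0 : ℝ), f s = (∫ s in Set.Ioc (0 : ℝ) (1 + L), f s) +
      ∫ s in Set.Ioi (1 + L : ℝ), f s := by
    rw [← setIntegral_union (Set.Ioc_disjoint_Ioi le_rfl) measurableSet_Ioi
      (hI.mono_set Set.Ioc_subset_Ioi_self) hI2, Set.Ioc_union_Ioi_eq_Ioi hpos]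
  have h4 : ∫ s in Set.Ioc (0 : ℝ) (1 + L), f s ≤ (1 + L) * θ := by
    have := setIntegral_mono_on (hI.mono_set Set.Ioc_subset_Ioi_self : IntegrableOn f (Set.Ioc (0:ℝ) (1 + L)))
      (integrableOn_const (by simp) : IntegrableOn (fun _ => θ) (Set.Ioc (0:ℝ) (1 + L))) measurableSet_Ioc
      (fun s hs => Theta_le h0 h1 (Real.rpow_nonneg hs.1.le _) (Real.rpow_pos_of_pos hc _))
    refine this.trans (le_of_eq ?_)
    simp [hpos]
  rw [Theta_rpow_integral h0 h1 hc] at h3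
  linarith

/-! ### Comparison -/

lemma phi_eq {θ : ℝ} (h0 : 0 < θ) (h1 : θ < Real.pi) {X Y : ℕ → ℝ} {j : ℕ} (hY : 0 ≤ Y j)
    (hs : Summable fun k : ℕ => Theta θ (X (k + 1)) (Y j)) :
    phi θ X Y j = ENNReal.ofReal (1 / Real.pi * ∑' k : ℕ, Theta θ (X (k + 1)) (Y j)) := by
  unfold phi
  rw [ENNReal.ofReal_mul (by have := Real.pi_pos; positivity),
    ENNReal.ofReal_tsum_of_nonneg (fun k => Theta_nonneg h0.le h1.le hY) hs]

lemma phi_anti {θ : ℝ} (h0 : 0 < θ) (h1 : θ < Real.pi) {X X' Y : ℕ → ℝ} {j : ℕ} (hY : 0 < Y j) (h : ∀ k, 1 ≤ k → X k ≤ X' k) :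
    phi θ X' Y j ≤ phi θ X Y j := by
  unfold phi
  gcongr with k
  exact Theta_anti h0 h1 (h _ (by omega)) hY

lemma phi_strict {θ : ℝ} (h0 : 0 < θ) (h1 : θ < Real.pi) {X Y Y' : ℕ → ℝ} {j : ℕ} (hX : ∀ k, 1 ≤ k → 0 < X k) (hY : 0 < Y j)
    (h : Y j < Y' j) (hfin : phi θ X Y' j ≠ ⊤) : phi θ X Y j < phi θ X Y' j := by
  have hpi := Real.pi_pos
  have hc : ENNReal.ofReal (1 / Real.pi) ≠ 0 := by
    rw [Ne, ENNReal.ofReal_eq_zero, not_le]; positivity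
  have hle : ∀ k : ℕ, Theta θ (X (k + 1)) (Y j) < Theta θ (X (k + 1)) (Y' j) := fun k =>
    Theta_strictMono h0 h1 (hX _ (by omega)) hY h
  unfold phi at hfin ⊢
  rw [ENNReal.mul_lt_mul_iff_right hc ENNReal.ofReal_ne_top]
  have hf2 : ∑' k : ℕ, ENNReal.ofReal (Theta θ (X (k + 1)) (Y' j)) ≠ ⊤ := by
    intro h
    rw [h, ENNReal.mul_top hc] at hfin
    exact hfin rfl
  refine ENNReal.tsum_lt_tsum (i := 0) (ne_top_of_le_ne_top hf2 ?_) ?_ ?_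
  · exact ENNReal.tsum_le_tsum fun k => ENNReal.ofReal_le_ofReal (hle k).le
  · exact fun k => ENNReal.ofReal_le_ofReal (hle k).le
  · rw [ENNReal.ofReal_lt_ofReal_iff']
    exact ⟨hle 0, (Theta_nonneg h0.le h1.le hY.le).trans_lt (hle 0)⟩

lemma compare_hi {θ : ℝ} (h0 : 0 < θ) (h1 : θ < Real.pi) {Q X Y Z : ℕ → ℝ} (hX : ∀ k, 1 ≤ k → 0 < X k)
    (hXZ : ∀ k, 1 ≤ k → X k ≤ Z k)
    (hZ : ∀ j, 1 ≤ j → ENNReal.ofReal (Q j) ≤ phi θ Z Z j)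
    (hXY : ∀ j, 1 ≤ j → phi θ X Y j = ENNReal.ofReal (Q j)) :
    ∀ j, 1 ≤ j → Y j ≤ Z j := by
  intro j hj
  by_contra hlt
  push Not at hlt
  have hZj : 0 < Z j := (hX j hj).trans_le (hXZ j hj)
  have a1 := phi_strict h0 h1 hX hZj hlt (by rw [hXY j hj]; exact ENNReal.ofReal_ne_top)
  have a2 := phi_anti h0 h1 hZj hXZ
  rw [hXY j hj] at a1
  exact absurd ((hZ j hj).trans a2) (not_le.2 a1)

lemma compare_lo {θ : ℝ} (h0 : 0 < θ) (h1 : θ < Real.pi) {Q X Y Z : ℕ → ℝ} (hX : ∀ k, 1 ≤ k → 0 < X k) (hY : ∀ k, 1 ≤ k → 0 < Y k)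
    (hXZ : ∀ k, 1 ≤ k → Z k ≤ X k)
    (hZ : ∀ j, 1 ≤ j → phi θ Z Z j ≤ ENNReal.ofReal (Q j))
    (hXY : ∀ j, 1 ≤ j → phi θ X Y j = ENNReal.ofReal (Q j)) :
    ∀ j, 1 ≤ j → Z j ≤ Y j := by
  intro j hj
  by_contra hlt
  push Not at hlt
  have a2 := (phi_anti h0 h1 ((hY j hj).trans hlt) hXZ).trans (hZ j hj)
  have a1 := phi_strict h0 h1 hX (hY j hj) hlt (ne_top_of_le_ne_top ENNReal.ofReal_ne_top a2)
  rw [hXY j hj] at a1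
  exact absurd a2 (not_le.2 a1)

lemma phi_smul {θ : ℝ} (Z : ℕ → ℝ) {c : ℝ} (hc : 0 < c) (j : ℕ) :
    phi θ (fun k => c * Z k) (fun k => c * Z k) j = phi θ Z Z j := by
  unfold phi
  simp only [Theta_smul θ hc]

lemma super_exists {θ : ℝ} (h0 : 0 < θ) (h1 : θ < Real.pi) {Q Zhi : ℕ → ℝ} {C : ℝ} (hC : ∀ j, |Q j - j| ≤ C)
    (hZhi : Tendsto (fun k : ℕ => Real.log (Zhi k) - (1 + θ / Real.pi) * Real.log k) atTop (𝓝 0))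
    (hpos : ∀ k, 1 ≤ k → 0 < Zhi k) {η : ℝ} (hη : 0 < η) :
    ∃ Z : ℕ → ℝ, (∀ k, 1 ≤ k → Zhi k ≤ Z k) ∧
      (∀ᶠ k : ℕ in atTop, Real.log (Z k) - (1 + θ / Real.pi) * Real.log k ≤ 2 * η) ∧
      ∀ j, 1 ≤ j → ENNReal.ofReal (Q j) ≤ phi θ Z Z j := by
  have hpi := Real.pi_pos
  have hα := alpha_gt h0 h1
  set α := 1 + θ / Real.pi with hαd
  -- eventual bound
  obtain ⟨K, hK⟩ := eventually_atTop.1 (hZhi.eventually (gt_mem_nhds hη))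
  -- choice of `L`
  have hL1 : ∀ᶠ L : ℕ in atTop, Real.pi * C + θ ≤ L * (Real.pi - θ) := by
    have : Tendsto (fun L : ℕ => (L : ℝ) * (Real.pi - θ)) atTop atTop :=
      tendsto_natCast_atTop_atTop.atTop_mul_const (by linarith)
    exact this.eventually_ge_atTop _
  have hL2 : ∀ᶠ L : ℕ in atTop, ∀ k ∈ Finset.range K, Zhi k ≤ (L : ℝ) ^ α := by
    rw [Finset.eventually_all]
    intro k _
    exact ((tendsto_rpow_atTop (by linarith : 0 < α)).comp
      tendsto_natCast_atTop_atTop).eventually_ge_atTop _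
  obtain ⟨L, hL1, hL2⟩ := (hL1.and hL2).exists
  have he : 1 ≤ Real.exp η := Real.one_le_exp hη.le
  refine ⟨fun k => Real.exp η * ((k + L : ℕ) : ℝ) ^ α, ?_, ?_, ?_⟩
  · intro k hk
    have hk0 : (0 : ℝ) < k := by exact_mod_cast hk
    by_cases hkK : k < K
    · have e1 := hL2 k (Finset.mem_range.2 hkK)
      have e2 : (L : ℝ) ^ α ≤ ((k + L : ℕ) : ℝ) ^ α :=
        Real.rpow_le_rpow (by positivity) (by push_cast; linarith) (by linarith)
      have e3 : (0 : ℝ) ≤ ((k + L : ℕ) : ℝ) ^ α := by positivity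
      nlinarith
    · have e1 := hK k (by omega)
      have e2 : Zhi k ≤ Real.exp η * (k : ℝ) ^ α := by
        rw [← Real.log_le_log_iff (hpos k hk) (by positivity), Real.log_mul (by positivity)
          (by positivity), Real.log_exp, Real.log_rpow hk0]
        linarith
      refine e2.trans ?_
      refine mul_le_mul_of_nonneg_left (Real.rpow_le_rpow hk0.le ?_ (by linarith)) (by positivity)
      push_cast
      linarith [(Nat.cast_nonneg L : (0 : ℝ) ≤ L)]
  · have hlim : Tendsto (fun k : ℕ => ((k + L : ℕ) : ℝ) / k) atTop (𝓝 1) := by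
      have : Tendsto (fun k : ℕ => 1 + (L : ℝ) / k) atTop (𝓝 (1 + 0)) :=
        tendsto_const_nhds.add (tendsto_const_div_atTop_nhds_zero_nat _)
      rw [add_zero] at this
      refine this.congr' ?_
      filter_upwards [eventually_ge_atTop 1] with k hk
      have hk0 : (k : ℝ) ≠ 0 := by positivity
      push_cast
      field_simp
    have hlim2 : Tendsto (fun k : ℕ => η + α * Real.log (((k + L : ℕ) : ℝ) / k)) atTop (𝓝 η) := by
      have := ((Real.continuousAt_log one_ne_zero).tendsto.comp hlim).const_mul α |>.const_add η
      simpa using this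
    filter_upwards [hlim2.eventually (gt_mem_nhds (show η < 2 * η by linarith)),
      eventually_ge_atTop 1] with k hk hk1
    have hk0 : (0 : ℝ) < k := by exact_mod_cast hk1
    have hk2 : (0 : ℝ) < ((k + L : ℕ) : ℝ) := by exact_mod_cast (by omega : 0 < k + L)
    rw [Real.log_mul (by positivity) (by positivity), Real.log_exp, Real.log_rpow hk2]
    rw [Real.log_div hk2.ne' hk0.ne'] at hk
    linarith
  · intro j hj
    rw [phi_smul _ (Real.exp_pos η)]
    have hjL : (0 : ℝ) < ((j + L : ℕ) : ℝ) := by exact_mod_cast (by omega : 0 < j + L)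
    obtain ⟨hs, hlow⟩ := sum_lower h0 h1 hjL L
    have hY : 0 ≤ (fun k : ℕ => ((k + L : ℕ) : ℝ) ^ α) j := Real.rpow_nonneg hjL.le _
    rw [phi_eq (X := fun k : ℕ => ((k + L : ℕ) : ℝ) ^ α) (Y := fun k : ℕ => ((k + L : ℕ) : ℝ) ^ α)
      h0 h1 hY hs]
    apply ENNReal.ofReal_le_ofReal
    rw [one_div, ← div_eq_inv_mul, le_div_iff₀ hpi]
    refine le_trans ?_ hlow
    have := (abs_le.1 (hC j)).2
    push_cast
    nlinarith

/-- model subsolution -/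
noncomputable def Wseq (α r : ℝ) (L k : ℕ) : ℝ :=
  if k ≤ L then r ^ (L + 1 - k) else ((k - L : ℕ) : ℝ) ^ α

lemma Wseq_pos (α : ℝ) {r : ℝ} (hr : 0 < r) (L k : ℕ) : 0 < Wseq α r L k := by
  unfold Wseq
  split_ifs with h
  · positivity
  · have : (0 : ℝ) < ((k - L : ℕ) : ℝ) := by exact_mod_cast (by omega : 0 < k - L)
    positivity

lemma Wseq_shift (α r : ℝ) (L k : ℕ) : Wseq α r L (k + L + 1) = ((k + 1 : ℕ) : ℝ) ^ α := by
  unfold Wseq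
  rw [if_neg (by omega)]
  congr 2
  omega

noncomputable def Vseq (α : ℝ) (L k : ℕ) : ℝ :=
  if k + 1 ≤ L then 1 else (((k + 1 - L : ℕ) : ℝ) ^ α)⁻¹

lemma Vseq_nonneg (α : ℝ) (L k : ℕ) : 0 ≤ Vseq α L k := by
  unfold Vseq; split_ifs <;> positivity

lemma Vseq_summable {α : ℝ} (hα : 1 < α) (L : ℕ) : Summable (Vseq α L) := by
  rw [← summable_nat_add_iff L]
  have := (summable_nat_add_iff 1).2 (Real.summable_nat_rpow_inv.2 hα)
  refine this.congr fun k => ?_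
  unfold Vseq
  rw [if_neg (by omega)]
  congr 3
  omega

lemma Wseq_ratio {α r : ℝ} (hr : 0 < r) (hr1 : r ≤ 1) {L j k : ℕ} (hj : j ≤ L)
    (hjk : j < k + 1) : Wseq α r L j / Wseq α r L (k + 1) ≤ r * Vseq α L k := by
  rw [div_le_iff₀ (Wseq_pos α hr L _)]
  unfold Wseq Vseq
  rw [if_pos hj]
  split_ifs with h
  · rw [mul_one, ← pow_succ']
    exact pow_le_pow_of_le_one hr.le hr1 (by omega)
  · have : (0 : ℝ) < ((k + 1 - L : ℕ) : ℝ) := by exact_mod_cast (by omega : 0 < k + 1 - L)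
    have h2 : (((k + 1 - L : ℕ) : ℝ) ^ α) ≠ 0 := by positivity
    rw [mul_assoc, inv_mul_cancel₀ h2, mul_one]
    calc r ^ (L + 1 - j) ≤ r ^ 1 := pow_le_pow_of_le_one hr.le hr1 (by omega)
      _ = r := pow_one r

lemma sub_small {θ : ℝ} (h0 : 0 < θ) (h1 : θ < Real.pi) {α r : ℝ} (hα : 1 < α) (hr : 0 < r) (hr1 : r ≤ 1) {L m : ℕ} (hj : m + 1 ≤ L) :
    (Summable fun k : ℕ => Theta θ (Wseq α r L (k + 1)) (Wseq α r L (m + 1))) ∧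
    ∑' k : ℕ, Theta θ (Wseq α r L (k + 1)) (Wseq α r L (m + 1)) ≤
      m * θ + θ / 2 + 2 * Real.pi * r * ∑' k, Vseq α L k := by
  have hW := Wseq_pos α hr L
  set u : ℕ → ℝ := fun k => if k < m then θ else if k = m then θ / 2 else 0 with hu
  have hu0 : ∀ k, k ∉ Finset.range (m + 1) → u k = 0 := by
    intro k hk
    rw [Finset.mem_range] at hk
    simp only [hu]
    rw [if_neg (by omega), if_neg (by omega)]
  have hus : HasSum u ((m : ℝ) * θ + θ / 2) := by
    have : HasSum u (∑ b ∈ Finset.range (m + 1), u b) := hasSum_sum_of_ne_finset_zero hu0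
    rw [Finset.sum_range_succ] at this
    convert this using 2
    · rw [Finset.sum_congr rfl (g := fun _ => θ)]
      · simp
      · intro k hk
        simp only [hu]
        rw [if_pos (Finset.mem_range.1 hk)]
    · simp [hu]
  have hb : ∀ k, Theta θ (Wseq α r L (k + 1)) (Wseq α r L (m + 1)) ≤
      u k + 2 * Real.pi * r * Vseq α L k := by
    intro k
    have hv : 0 ≤ 2 * Real.pi * r * Vseq α L k := by
      have := Vseq_nonneg α L k
      have := Real.pi_pos
      positivity
    rcases lt_trichotomy k m with h | h | h
    · have := Theta_le h0 h1 (hW (k + 1)).le (hW (m + 1))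
      simp only [hu]
      rw [if_pos h]; linarith
    · subst h
      rw [Theta_self h0 h1 (hW _)]
      simp only [hu, lt_irrefl, if_true, if_false]; linarith
    · have e1 := (le_abs_self _).trans (abs_Theta_le θ (hW (k + 1)) (hW (m + 1)))
      have e2 := Wseq_ratio (α := α) hr hr1 hj (show m + 1 < k + 1 by omega)
      rw [hu0 k (by simp; omega), zero_add]
      refine e1.trans ?_
      rw [mul_assoc (2 * Real.pi)]
      have := Real.pi_pos
      gcongr
  have hnn : ∀ k, 0 ≤ Theta θ (Wseq α r L (k + 1)) (Wseq α r L (m + 1)) := fun k =>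
    Theta_nonneg h0.le h1.le (hW _).le
  have hsum := hus.add ((Vseq_summable hα L).hasSum.mul_left (2 * Real.pi * r))
  have hs := Summable.of_nonneg_of_le hnn hb hsum.summable
  refine ⟨hs, ?_⟩
  rw [← hsum.tsum_eq]
  exact hs.tsum_le_tsum hb hsum.summable

lemma sub_large {θ : ℝ} (h0 : 0 < θ) (h1 : θ < Real.pi) {r : ℝ} (hr : 0 < r) (L m : ℕ) :
    (Summable fun k : ℕ => Theta θ (Wseq (1 + θ / Real.pi) r L (k + 1))
      (Wseq (1 + θ / Real.pi) r L (m + L + 1))) ∧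
    ∑' k : ℕ, Theta θ (Wseq (1 + θ / Real.pi) r L (k + 1))
      (Wseq (1 + θ / Real.pi) r L (m + L + 1)) ≤ L * θ + (m + 1) * Real.pi := by
  have hW := Wseq_pos (1 + θ / Real.pi) hr L
  have hm : (0 : ℝ) < ((m + 1 : ℕ) : ℝ) := by positivity
  obtain ⟨hs, hle⟩ := sum_upper h0 h1 hm
  rw [Wseq_shift]
  have hs2 : Summable fun k : ℕ => Theta θ (Wseq (1 + θ / Real.pi) r L (k + 1))
      (((m + 1 : ℕ) : ℝ) ^ (1 + θ / Real.pi)) := by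
    rw [← summable_nat_add_iff L]
    simpa only [Wseq_shift] using hs
  refine ⟨hs2, ?_⟩
  rw [← hs2.sum_add_tsum_nat_add L]
  simp only [Wseq_shift]
  apply add_le_add
  · refine (Finset.sum_le_card_nsmul _ _ θ fun k _ => ?_).trans ?_
    · exact Theta_le h0 h1 (hW _).le (by positivity)
    · simp
  · exact_mod_cast hle

lemma sub_exists {θ : ℝ} (h0 : 0 < θ) (h1 : θ < Real.pi) {Q Zlo : ℕ → ℝ} {C : ℝ} (hC : ∀ j, |Q j - j| ≤ C)
    (hQ' : ∀ k : ℕ, 1 ≤ k → ((k : ℝ) - 1 / 2) * θ / Real.pi < Q k)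
    (hZlo : Tendsto (fun k : ℕ => Real.log (Zlo k) - (1 + θ / Real.pi) * Real.log k) atTop (𝓝 0))
    (hpos : ∀ k, 1 ≤ k → 0 < Zlo k) {η : ℝ} (hη : 0 < η) :
    ∃ Z : ℕ → ℝ, (∀ k, 1 ≤ k → 0 < Z k) ∧ (∀ k, 1 ≤ k → Z k ≤ Zlo k) ∧
      (∀ᶠ k : ℕ in atTop, -(2 * η) ≤ Real.log (Z k) - (1 + θ / Real.pi) * Real.log k) ∧
      ∀ j, 1 ≤ j → phi θ Z Z j ≤ ENNReal.ofReal (Q j) := by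
  have hpi := Real.pi_pos
  have hα := alpha_gt h0 h1
  obtain ⟨K, hK⟩ := eventually_atTop.1 (hZlo.eventually (lt_mem_nhds (neg_neg_of_pos hη)))
  have hL1 : ∀ᶠ L : ℕ in atTop, Real.pi * C ≤ L * (Real.pi - θ) := by
    have : Tendsto (fun L : ℕ => (L : ℝ) * (Real.pi - θ)) atTop atTop :=
      tendsto_natCast_atTop_atTop.atTop_mul_const (by linarith)
    exact this.eventually_ge_atTop _
  obtain ⟨L, hL1, hLK⟩ := (hL1.and (eventually_ge_atTop K)).exists
  have hR1 : ∀ᶠ r : ℝ in 𝓝[>] 0, ∀ k ∈ Finset.Icc 1 L, r ≤ Zlo k := by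
    rw [Finset.eventually_all]
    intro k hk
    have := hpos k (Finset.mem_Icc.1 hk).1
    exact nhdsWithin_le_nhds ((gt_mem_nhds this).mono fun r hr => hr.le)
  have hR2 : ∀ᶠ r : ℝ in 𝓝[>] 0, ∀ k ∈ Finset.Icc 1 L,
      2 * Real.pi * r * ∑' i, Vseq (1 + θ / Real.pi) L i ≤ Real.pi * Q k - ((k : ℝ) - 1 / 2) * θ := by
    rw [Finset.eventually_all]
    intro k hk
    have h := hQ' k (Finset.mem_Icc.1 hk).1
    rw [div_lt_iff₀ hpi] at h
    have hlim : Tendsto (fun r : ℝ => 2 * Real.pi * r * ∑' i, Vseq (1 + θ / Real.pi) L i) (𝓝 0) (𝓝 0) := by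
      have : Continuous (fun r : ℝ => 2 * Real.pi * r * ∑' i, Vseq (1 + θ / Real.pi) L i) := by
        fun_prop
      simpa using this.tendsto 0
    exact nhdsWithin_le_nhds ((hlim.eventually (gt_mem_nhds (show 0 < Real.pi * Q k - ((k : ℝ) - 1 / 2) * θ by linarith))).mono
      fun r hr => hr.le)
  have hR3 : ∀ᶠ r : ℝ in 𝓝[>] 0, r ∈ Set.Ioo (0 : ℝ) 1 := Ioo_mem_nhdsGT one_pos
  obtain ⟨r, hR1, hR2, hr, hr1⟩ := (hR1.and (hR2.and hR3)).exists
  have hW := Wseq_pos (1 + θ / Real.pi) hr L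
  have he : Real.exp (-η) ≤ 1 := Real.exp_le_one_iff.2 (by linarith)
  have he0 := Real.exp_pos (-η)
  refine ⟨fun k => Real.exp (-η) * Wseq (1 + θ / Real.pi) r L k, fun k _ => mul_pos he0 (hW k), ?_, ?_, ?_⟩
  · intro k hk
    have hk0 : (0 : ℝ) < k := by exact_mod_cast hk
    by_cases hkL : k ≤ L
    · have e1 := hR1 k (Finset.mem_Icc.2 ⟨hk, hkL⟩)
      have e2 : Wseq (1 + θ / Real.pi) r L k ≤ r := by
        unfold Wseq
        rw [if_pos hkL]
        calc r ^ (L + 1 - k) ≤ r ^ 1 := pow_le_pow_of_le_one hr.le hr1.le (by omega)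
          _ = r := pow_one r
      have := hW k
      nlinarith
    · have e1 := hK k (by omega)
      have e2 : Real.exp (-η) * (k : ℝ) ^ (1 + θ / Real.pi) ≤ Zlo k := by
        rw [← Real.log_le_log_iff (by positivity) (hpos k hk), Real.log_mul (by positivity)
          (by positivity), Real.log_exp, Real.log_rpow hk0]
        linarith
      refine le_trans ?_ e2
      have e3 : Wseq (1 + θ / Real.pi) r L k = ((k - L : ℕ) : ℝ) ^ (1 + θ / Real.pi) := by
        unfold Wseq
        rw [if_neg hkL]
      refine mul_le_mul_of_nonneg_left ?_ he0.le
      rw [e3]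
      refine Real.rpow_le_rpow (by positivity) ?_ (by linarith)
      have : k - L ≤ k := by omega
      exact_mod_cast this
  · have hlim : Tendsto (fun k : ℕ => ((k - L : ℕ) : ℝ) / k) atTop (𝓝 1) := by
      have : Tendsto (fun k : ℕ => 1 - (L : ℝ) / k) atTop (𝓝 (1 - 0)) :=
        tendsto_const_nhds.sub (tendsto_const_div_atTop_nhds_zero_nat _)
      rw [sub_zero] at this
      refine this.congr' ?_
      filter_upwards [eventually_ge_atTop (L + 1)] with k hk
      have hk0 : (k : ℝ) ≠ 0 := by
        have : k ≠ 0 := by omega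
        exact_mod_cast this
      rw [Nat.cast_sub (by omega)]
      field_simp
    have hlim2 : Tendsto (fun k : ℕ => -η + (1 + θ / Real.pi) * Real.log (((k - L : ℕ) : ℝ) / k)) atTop (𝓝 (-η)) := by
      have := ((Real.continuousAt_log one_ne_zero).tendsto.comp hlim).const_mul (1 + θ / Real.pi) |>.const_add (-η)
      simpa using this
    filter_upwards [hlim2.eventually (lt_mem_nhds (show -(2 * η) < -η by linarith)),
      eventually_ge_atTop (L + 1)] with k hk hk1
    have hk0 : (0 : ℝ) < k := by exact_mod_cast (by omega : 0 < k)
    have hk2 : (0 : ℝ) < ((k - L : ℕ) : ℝ) := by exact_mod_cast (by omega : 0 < k - L)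
    rw [Real.log_mul (by positivity) (hW k).ne', Real.log_exp]
    unfold Wseq
    rw [if_neg (by omega), Real.log_rpow hk2]
    rw [Real.log_div hk2.ne' hk0.ne'] at hk
    linarith
  · intro j hj
    rw [phi_smul _ he0]
    by_cases hjL : j ≤ L
    · obtain ⟨m, rfl⟩ : ∃ m, j = m + 1 := ⟨j - 1, by omega⟩
      obtain ⟨hs, hle⟩ := sub_small h0 h1 hα hr hr1.le hjL
      rw [phi_eq h0 h1 (hW _).le hs]
      apply ENNReal.ofReal_le_ofReal
      rw [one_div, ← div_eq_inv_mul, div_le_iff₀ hpi]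
      refine hle.trans ?_
      have := hR2 (m + 1) (Finset.mem_Icc.2 ⟨hj, hjL⟩)
      push_cast at this
      linarith
    · obtain ⟨m, rfl⟩ : ∃ m, j = m + L + 1 := ⟨j - L - 1, by omega⟩
      obtain ⟨hs, hle⟩ := sub_large h0 h1 hr L m
      rw [phi_eq h0 h1 (hW _).le hs]
      apply ENNReal.ofReal_le_ofReal
      rw [one_div, ← div_eq_inv_mul, div_le_iff₀ hpi]
      refine hle.trans ?_
      have := (abs_le.1 (hC (m + L + 1))).1
      push_cast at this
      nlinarith

theorem stmt_15 (θ : ℝ) (hθ : 0 < θ) (hθπ : θ < Real.pi)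
    (Q : ℕ → ℝ) (hQpos : ∀ k, 1 ≤ k → 0 < Q k)
    (hQ : (fun k : ℕ => Q k - (k : ℝ)) =O[atTop] fun _ : ℕ => (1 : ℝ))
    (hQ' : ∀ k : ℕ, 1 ≤ k → ((k : ℝ) - 1 / 2) * θ / Real.pi < Q k)
    (Zlo Zhi : ℕ → ℝ) (hZlopos : ∀ k, 1 ≤ k → 0 < Zlo k)
    (hZle : ∀ k, 1 ≤ k → Zlo k ≤ Zhi k)
    (hZlo : (fun k : ℕ => Real.log (Zlo k) - (1 + θ / Real.pi) * Real.log k)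
      =o[atTop] fun _ : ℕ => (1 : ℝ))
    (hZhi : (fun k : ℕ => Real.log (Zhi k) - (1 + θ / Real.pi) * Real.log k)
      =o[atTop] fun _ : ℕ => (1 : ℝ)) :
    ∃ Zlo' Zhi' : ℕ → ℝ, (∀ k, 1 ≤ k → 0 < Zlo' k) ∧ (∀ k, 1 ≤ k → Zlo' k ≤ Zhi' k) ∧
      ((fun k : ℕ => Real.log (Zlo' k) - (1 + θ / Real.pi) * Real.log k)
        =o[atTop] fun _ : ℕ => (1 : ℝ)) ∧
      ((fun k : ℕ => Real.log (Zhi' k) - (1 + θ / Real.pi) * Real.log k)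
        =o[atTop] fun _ : ℕ => (1 : ℝ)) ∧
      ∀ X : ℕ → ℕ → ℝ, (∀ n, ∀ k, 1 ≤ k → 0 < X n k) →
        (∀ k, 1 ≤ k → Zlo k ≤ X 0 k ∧ X 0 k ≤ Zhi k) →
        (∀ n : ℕ, ∀ j, 1 ≤ j → phi θ (X n) (X (n + 1)) j = ENNReal.ofReal (Q j)) →
        ∀ n : ℕ, ∀ k, 1 ≤ k → Zlo' k ≤ X n k ∧ X n k ≤ Zhi' k := by
  have hα := alpha_gt hθ hθπ
  obtain ⟨C, hC⟩ := (Asymptotics.isBigO_one_nat_atTop_iff).1 hQ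
  simp only [Real.norm_eq_abs] at hC
  rw [Asymptotics.isLittleO_one_iff] at hZlo hZhi
  have hZhipos : ∀ k, 1 ≤ k → 0 < Zhi k := fun k hk => (hZlopos k hk).trans_le (hZle k hk)
  have hη : ∀ m : ℕ, (0 : ℝ) < 1 / ((m : ℝ) + 1) := fun m => by positivity
  choose U hU1 hU2 hU3 using fun m : ℕ => super_exists hθ hθπ hC hZhi hZhipos (hη m)
  choose V hV0 hV1 hV2 hV3 using fun m : ℕ => sub_exists hθ hθπ hC hQ' hZlo hZlopos (hη m)
  have hbU : ∀ k, 1 ≤ k → BddBelow (Set.range fun m => U m k) := fun k hk =>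
    ⟨Zhi k, by rintro _ ⟨m, rfl⟩; exact hU1 m k hk⟩
  have hbV : ∀ k, 1 ≤ k → BddAbove (Set.range fun m => V m k) := fun k hk =>
    ⟨Zlo k, by rintro _ ⟨m, rfl⟩; exact hV1 m k hk⟩
  have hposlo : ∀ k, 1 ≤ k → 0 < ⨆ m, V m k := fun k hk =>
    (hV0 0 k hk).trans_le (le_ciSup (hbV k hk) 0)
  have hlole : ∀ k, 1 ≤ k → ⨆ m, V m k ≤ Zlo k := fun k hk => ciSup_le fun m => hV1 m k hk
  have hhile : ∀ k, 1 ≤ k → Zhi k ≤ ⨅ m, U m k := fun k hk => le_ciInf fun m => hU1 m k hk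
  have hsmall : ∀ ε : ℝ, 0 < ε → ∃ m : ℕ, 2 * (1 / ((m : ℝ) + 1)) < ε := by
    intro ε hε
    obtain ⟨m, hm⟩ := exists_nat_one_div_lt (half_pos hε)
    exact ⟨m, by linarith⟩
  refine ⟨fun k => ⨆ m, V m k, fun k => ⨅ m, U m k, hposlo,
    fun k hk => (hlole k hk).trans ((hZle k hk).trans (hhile k hk)), ?_, ?_, ?_⟩
  · rw [Asymptotics.isLittleO_one_iff, tendsto_order]
    constructor
    · intro a ha
      obtain ⟨m, hm⟩ := hsmall (-a) (by linarith)
      filter_upwards [hV2 m, eventually_ge_atTop 1] with k hk hk1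
      have := Real.log_le_log (hV0 m k hk1) (le_ciSup (hbV k hk1) m)
      linarith
    · intro a ha
      filter_upwards [hZlo.eventually (gt_mem_nhds ha), eventually_ge_atTop 1] with k hk hk1
      have := Real.log_le_log (hposlo k hk1) (hlole k hk1)
      linarith
  · rw [Asymptotics.isLittleO_one_iff, tendsto_order]
    constructor
    · intro a ha
      filter_upwards [hZhi.eventually (lt_mem_nhds ha), eventually_ge_atTop 1] with k hk hk1
      have := Real.log_le_log (hZhipos k hk1) (hhile k hk1)
      linarith
    · intro a ha
      obtain ⟨m, hm⟩ := hsmall a ha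
      filter_upwards [hU2 m, eventually_ge_atTop 1] with k hk hk1
      have := Real.log_le_log ((hZhipos k hk1).trans_le (hhile k hk1)) (ciInf_le (hbU k hk1) m)
      linarith
  · intro X hX hX0 hstep n
    have hhi : ∀ m : ℕ, ∀ n : ℕ, ∀ k, 1 ≤ k → X n k ≤ U m k := by
      intro m n
      induction n with
      | zero => exact fun k hk => (hX0 k hk).2.trans (hU1 m k hk)
      | succ n ih => exact compare_hi hθ hθπ (hX n) ih (hU3 m) (hstep n)
    have hlo : ∀ m : ℕ, ∀ n : ℕ, ∀ k, 1 ≤ k → V m k ≤ X n k := by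
      intro m n
      induction n with
      | zero => exact fun k hk => (hV1 m k hk).trans (hX0 k hk).1
      | succ n ih => exact compare_lo hθ hθπ (hX n) (hX (n + 1)) ih (hV3 m) (hstep n)
    exact fun k hk => ⟨ciSup_le fun m => hlo m n k hk, le_ciInf fun m => hhi m n k hk⟩
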